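/- arXiv:2207.10060 — 2 statements merged into one kernel-verified Lean document; each statement's English description precedes it below -/
import Mathlib

section
/- Let w, w0 ∈ ℂ with w ≠ 2, let l ≥ 1 be an integer, and define P = (1 + w/2)/(1 − w/2) and Q = (1/2)/(1 − w/2). Let V ∈ ℂ and define the sequence Y_0 = V and, for k = 1, …, l, Y_k by (1 − w/2)·Y_k = (1 + w/2)·V + (w0/2)·(Y_{k-1} + V). Then Y_l = R(w,w0)·V, where R(w,w0) = (w0·Q)^l + Σ_{k=0}^{l-1} (w0·Q)^k · (P + w0·Q) = ((w0/2)/(1 − w/2))^l + Σ_{k=0}^{l-1} ((w0/2)/(1 − w/2))^k · (1 + w/2 + w0/2)/(1 − w/2). -/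
open Finset in
/-- Derivation of the stability function of the CNFI scheme: with `w ≠ 2`,
`P = (1 + w/2)/(1 − w/2)`, `Q = (1/2)/(1 − w/2)`, `Y_0 = V` and, for
`k = 1, …, l`, `(1 − w/2)·Y_k = (1 + w/2)·V + (w0/2)·(Y_{k-1} + V)`,
one has `Y_l = R(w,w0)·V`, where
`R(w,w0) = (w0·Q)^l + Σ_{k=0}^{l-1} (w0·Q)^k·(P + w0·Q)
         = ((w0/2)/(1 − w/2))^l + Σ_{k=0}^{l-1} ((w0/2)/(1 − w/2))^k·(1 + w/2 + w0/2)/(1 − w/2)`. -/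
theorem cnfi_stability_function (w w0 : ℂ) (hw : w ≠ 2) (l : ℕ) (hl : 1 ≤ l)
    (P Q : ℂ) (hP : P = (1 + w / 2) / (1 - w / 2)) (hQ : Q = (1 / 2) / (1 - w / 2))
    (V : ℂ) (Y : ℕ → ℂ) (hY0 : Y 0 = V)
    (hYk : ∀ k : ℕ, 1 ≤ k → k ≤ l →
      (1 - w / 2) * Y k = (1 + w / 2) * V + (w0 / 2) * (Y (k - 1) + V)) :
    Y l = ((w0 * Q) ^ l + ∑ k ∈ range l, (w0 * Q) ^ k * (P + w0 * Q)) * V ∧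
    (w0 * Q) ^ l + ∑ k ∈ range l, (w0 * Q) ^ k * (P + w0 * Q)
      = ((w0 / 2) / (1 - w / 2)) ^ l +
        ∑ k ∈ range l, ((w0 / 2) / (1 - w / 2)) ^ k *
          ((1 + w / 2 + w0 / 2) / (1 - w / 2)) := by
  have hne : (1 - w / 2) ≠ 0 := by
    intro h
    apply hw
    linear_combination (-2) * h
  have h1 : (1 - w / 2) * P = 1 + w / 2 := by
    rw [hP]; exact mul_div_cancel₀ _ hne
  have h2 : (1 - w / 2) * Q = 1 / 2 := by
    rw [hQ]; exact mul_div_cancel₀ _ hne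
  constructor
  · have key : ∀ m : ℕ, m ≤ l →
        Y m = ((w0 * Q) ^ m + ∑ k ∈ range m, (w0 * Q) ^ k * (P + w0 * Q)) * V := by
      intro m
      induction m with
      | zero => intro _; simp [hY0]
      | succ m ih =>
        intro hm
        have ihm := ih (by omega)
        have h := hYk (m + 1) (by omega) hm
        rw [Nat.add_sub_cancel] at h
        have hstep : Y (m + 1) = (P + w0 * Q) * V + w0 * Q * Y m := by
          apply mul_left_cancel₀ hne
          linear_combination h - V * h1 - w0 * (V + Y m) * h2
        have hsum : ∑ k ∈ range (m + 1), (w0 * Q) ^ k * (P + w0 * Q)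
            = w0 * Q * ∑ k ∈ range m, (w0 * Q) ^ k * (P + w0 * Q) + (P + w0 * Q) := by
          rw [Finset.sum_range_succ', Finset.mul_sum, pow_zero, one_mul]
          congr 1
          apply Finset.sum_congr rfl
          intro k _
          ring
        rw [hstep, hsum, ihm]
        ring
    exact key l le_rfl
  · have e1 : w0 * Q = (w0 / 2) / (1 - w / 2) := by rw [hQ]; ring
    have e2 : P + w0 * Q = (1 + w / 2 + w0 / 2) / (1 - w / 2) := by rw [hP, hQ]; ring
    rw [e2, e1]
end

section
/- Let α, β > 0, let 0 ≤ x₀ < x₁ and 0 ≤ y₀ < y₁, and let V₀₀, V₁₀, V₀₁, V₁₁ ∈ ℝ. Set δ = (x₁ − x₀)(y₁ − y₀) and define the bilinear interpolant ṽ(z₁,z₂) = [(x₁ − z₁)(y₁ − z₂)V₀₀ + (z₁ − x₀)(y₁ − z₂)V₁₀ + (x₁ − z₁)(z₂ − y₀)V₀₁ + (z₁ − x₀)(z₂ − y₀)V₁₁]/δ. For i, j ∈ {0,1} define ζ^{ij} = (x₁^{i+α} − x₀^{i+α})(y₁^{j+β} − y₀^{j+β})/((i+α)(j+β)). Then ∫_{y₀}^{y₁}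 ∫_{x₀}^{x₁} z₁^{α−1} z₂^{β−1} ṽ(z₁,z₂) dz₁ dz₂ = γ^{00}V₀₀ + γ^{10}V₁₀ + γ^{01}V₀₁ + γ^{11}V₁₁, where γ^{00} = (x₁y₁ζ^{00} − y₁ζ^{10} − x₁ζ^{01} + ζ^{11})/δ, γ^{10} = (−x₀y₁ζ^{00} + y₁ζ^{10} + x₀ζ^{01} − ζ^{11})/δ, γ^{01} = (−x₁y₀ζ^{00} + y₀ζ^{10} + x₁ζ^{01} − ζ^{11})/δ, and γ^{11} = (x₀y₀ζ^{00} − y₀ζ^{10} − x₀ζ^{01} + ζ^{11})/δ. -/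
/-- Integral of an affine function against a power weight. -/
theorem affine_rpow_integral (a b r p q : ℝ) (hr : 0 < r) (ha : 0 ≤ a) (hab : a < b) :
    ∫ z in a..b, z ^ (r - 1) * (p + q * z) =
      p * ((b ^ r - a ^ r) / r) + q * ((b ^ (1 + r) - a ^ (1 + r)) / (1 + r)) := by
  have h1 : ∫ z in a..b, z ^ (r - 1) * (p + q * z) =
      ∫ z in a..b, (p * z ^ (r - 1) + q * z ^ r) := by
    apply intervalIntegral.integral_congr_uIoo
    intro z hz
    rw [Set.uIoo_of_le hab.le] at hz
    have hz0 : 0 < z := lt_of_le_of_lt ha hz.1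
    have h2 : z ^ r = z ^ (r - 1) * z := by
      rw [← Real.rpow_add_one hz0.ne', sub_add_cancel]
    simp only [h2]
    ring
  rw [h1, intervalIntegral.integral_add
    ((intervalIntegral.intervalIntegrable_rpow' (by linarith)).const_mul p)
    ((intervalIntegral.intervalIntegrable_rpow' (by linarith)).const_mul q),
    intervalIntegral.integral_const_mul, intervalIntegral.integral_const_mul,
    integral_rpow (Or.inl (by linarith)), integral_rpow (Or.inl (by linarith)),
    sub_add_cancel, add_comm r 1]

/-- Closed form for the weighted cell integral of a bilinear interpolant:
with `α, β > 0`, `0 ≤ x₀ < x₁`, `0 ≤ y₀ < y₁`, corner values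
`V₀₀, V₁₀, V₀₁, V₁₁`, `δ = (x₁ − x₀)(y₁ − y₀)`, bilinear interpolant `ṽ`,
and moments `ζ^{ij} = (x₁^{i+α} − x₀^{i+α})(y₁^{j+β} − y₀^{j+β})/((i+α)(j+β))`,
the integral `∫∫ z₁^{α−1} z₂^{β−1} ṽ(z₁,z₂) dz₁ dz₂` over the cell equals
`γ^{00}V₀₀ + γ^{10}V₁₀ + γ^{01}V₀₁ + γ^{11}V₁₁` with the stated weights. -/
theorem bilinear_cell_integral (α β : ℝ) (hα : 0 < α) (hβ : 0 < β)
    (x0 x1 y0 y1 : ℝ) (hx0 : 0 ≤ x0) (hx : x0 < x1) (hy0 : 0 ≤ y0) (hy : y0 < y1)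
    (V00 V10 V01 V11 : ℝ)
    (δ : ℝ) (hδ : δ = (x1 - x0) * (y1 - y0))
    (vt : ℝ → ℝ → ℝ)
    (hvt : ∀ z1 z2 : ℝ, vt z1 z2 =
      ((x1 - z1) * (y1 - z2) * V00 + (z1 - x0) * (y1 - z2) * V10 +
       (x1 - z1) * (z2 - y0) * V01 + (z1 - x0) * (z2 - y0) * V11) / δ)
    (ζ : ℕ → ℕ → ℝ)
    (hζ : ∀ i j : ℕ, i ≤ 1 → j ≤ 1 → ζ i j =
      (x1 ^ ((i : ℝ) + α) - x0 ^ ((i : ℝ) + α)) *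
      (y1 ^ ((j : ℝ) + β) - y0 ^ ((j : ℝ) + β)) / (((i : ℝ) + α) * ((j : ℝ) + β)))
    (γ00 γ10 γ01 γ11 : ℝ)
    (hγ00 : γ00 = (x1 * y1 * ζ 0 0 - y1 * ζ 1 0 - x1 * ζ 0 1 + ζ 1 1) / δ)
    (hγ10 : γ10 = (-x0 * y1 * ζ 0 0 + y1 * ζ 1 0 + x0 * ζ 0 1 - ζ 1 1) / δ)
    (hγ01 : γ01 = (-x1 * y0 * ζ 0 0 + y0 * ζ 1 0 + x1 * ζ 0 1 - ζ 1 1) / δ)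
    (hγ11 : γ11 = (x0 * y0 * ζ 0 0 - y0 * ζ 1 0 - x0 * ζ 0 1 + ζ 1 1) / δ) :
    ∫ z2 in y0..y1, ∫ z1 in x0..x1, z1 ^ (α - 1) * z2 ^ (β - 1) * vt z1 z2
      = γ00 * V00 + γ10 * V10 + γ01 * V01 + γ11 * V11 := by
  have hin : ∀ z2 : ℝ, ∫ z1 in x0..x1, z1 ^ (α - 1) * z2 ^ (β - 1) * vt z1 z2 =
      z2 ^ (β - 1) *
        (((x1 * y1 * V00 - x0 * y1 * V10 - x1 * y0 * V01 + x0 * y0 * V11) / δ *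
            ((x1 ^ α - x0 ^ α) / α) +
          (-y1 * V00 + y1 * V10 + y0 * V01 - y0 * V11) / δ *
            ((x1 ^ (1 + α) - x0 ^ (1 + α)) / (1 + α))) +
         ((-x1 * V00 + x0 * V10 + x1 * V01 - x0 * V11) / δ * ((x1 ^ α - x0 ^ α) / α) +
          (V00 - V10 - V01 + V11) / δ *
            ((x1 ^ (1 + α) - x0 ^ (1 + α)) / (1 + α))) * z2) := by
    intro z2
    have h := affine_rpow_integral x0 x1 α
      (z2 ^ (β - 1) * (x1 * (y1 - z2) * V00 - x0 * (y1 - z2) * V10 +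
        x1 * (z2 - y0) * V01 - x0 * (z2 - y0) * V11) / δ)
      (z2 ^ (β - 1) * (-(y1 - z2) * V00 + (y1 - z2) * V10 -
        (z2 - y0) * V01 + (z2 - y0) * V11) / δ) hα hx0 hx
    refine Eq.trans ?_ (h.trans ?_)
    · congr 1
      funext z1
      rw [hvt]
      ring
    · ring
  simp only [hin]
  rw [affine_rpow_integral y0 y1 β _ _ hβ hy0 hy, hγ00, hγ10, hγ01, hγ11,
    hζ 0 0 (by norm_num) (by norm_num), hζ 1 0 (by norm_num) (by norm_num),
    hζ 0 1 (by norm_num) (by norm_num), hζ 1 1 (by norm_num) (by norm_num)]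
  simp only [Nat.cast_zero, Nat.cast_one, zero_add, div_eq_mul_inv, mul_inv]
  generalize x1 ^ α = a1
  generalize x0 ^ α = a2
  generalize x1 ^ (1 + α) = a3
  generalize x0 ^ (1 + α) = a4
  generalize y1 ^ β = b1
  generalize y0 ^ β = b2
  generalize y1 ^ (1 + β) = b3
  generalize y0 ^ (1 + β) = b4
  generalize (1 + α)⁻¹ = c1
  generalize (1 + β)⁻¹ = c2
  ring
end
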